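/- arXiv:2511.12187 — 2 statements merged into one kernel-verified Lean document; each statement's English description precedes it below -/
import Mathlib

section
/- Let q ∈ ℋ and k ∈ ℕ₀, and define η_k(a) = Σ_{i=1}^{⌊k/2⌋} a^{k+1−2i} ∏_{j=1}^{i−1}(k+1−2j) + ∏_{j=1}^{⌊k/2⌋}(k+1−2j) (empty sums are 0, empty products are 1). Then for all x ∈ ℝ: (a) |f_k(x)| ≤ η_k(|x|); (b) |f_k'(x)| ≤ |x|·η_k(|x|) + ∫_ℝ |y|^k ψ(y) dy. -/
open MeasureTheory Finset

/-- Density of the standard normal distribution. -/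
noncomputable def gaussD (x : ℝ) : ℝ := (Real.sqrt (2 * Real.pi))⁻¹ * Real.exp (-(x ^ 2) / 2)

/-- Expectation of `g` with respect to the standard normal distribution, `Φ(g)`. -/
noncomputable def PhiInt (g : ℝ → ℝ) : ℝ := ∫ x, g x * gaussD x

/-- The class `ℋ` of monotonically decreasing, left-continuous functions `ℝ → [0,1]`. -/
def memH (h : ℝ → ℝ) : Prop :=
  (∀ x, h x ∈ Set.Icc (0 : ℝ) 1) ∧ Antitone h ∧
    ∀ x, ContinuousWithinAt h (Set.Iic x) x

/-- The Stein solution `f_k` for the function `|x|^k q(x)`. -/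
noncomputable def steinF (q : ℝ → ℝ) (k : ℕ) (x : ℝ) : ℝ :=
  (gaussD x)⁻¹ *
    ∫ y in Set.Iic x, (|y| ^ k * q y - PhiInt (fun v => |v| ^ k * q v)) * gaussD y

/-- `f_k'`, defined through Stein's equation. -/
noncomputable def steinF' (q : ℝ → ℝ) (k : ℕ) (x : ℝ) : ℝ :=
  x * steinF q k x + |x| ^ k * q x - PhiInt (fun v => |v| ^ k * q v)

/-- The auxiliary function `η_k(a)`. -/
noncomputable def eta (k : ℕ) (a : ℝ) : ℝ :=
  (∑ i ∈ Finset.Icc 1 (k / 2),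
      a ^ (k + 1 - 2 * i) * ∏ j ∈ Finset.Icc 1 (i - 1), ((k : ℝ) + 1 - 2 * (j : ℝ)))
    + ∏ j ∈ Finset.Icc 1 (k / 2), ((k : ℝ) + 1 - 2 * (j : ℝ))

/-!
Writing `Ψ` for the standard normal tail, `A` and `B` for the integrals of `|y|^k q(y) ψ(y)` over
`(-∞, x]` and `(x, ∞)`, one has `ψ(x) f_k(x) = Ψ(x) A - (1 - Ψ(x)) B`, a difference of nonnegative
terms, so it suffices to bound each of them with `q` replaced by `1`.  Both bounds follow for
`x ≥ 0` by induction on `k` in steps of two: integration by parts gives the tail moments the same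
recursion as `η_k`, and the base cases are `Ψ (1 - Ψ) ≤ ψ` and `2 ψ(0) Ψ ≤ ψ`.  For the derivative,
the Mills ratio bound `x Ψ(x) ≤ ψ(x)` yields `x f_k(x) ≤ A`.  The case `x ≤ 0` follows by
reflecting `q`.
-/

section Density

theorem gaussD_eq_gaussianPDFReal : gaussD = ProbabilityTheory.gaussianPDFReal 0 1 := by
  ext x
  simp [gaussD, ProbabilityTheory.gaussianPDFReal]

theorem gaussD_pos (x : ℝ) : 0 < gaussD x := by
  rw [gaussD_eq_gaussianPDFReal]
  exact ProbabilityTheory.gaussianPDFReal_pos 0 1 x one_ne_zero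

theorem gaussD_neg (x : ℝ) : gaussD (-x) = gaussD x := by
  simp only [gaussD, neg_sq]

theorem gaussD_abs (x : ℝ) : gaussD |x| = gaussD x := by
  simp only [gaussD, sq_abs]

theorem continuous_gaussD : Continuous gaussD := by
  unfold gaussD
  fun_prop

theorem integrable_gaussD : Integrable gaussD := by
  rw [gaussD_eq_gaussianPDFReal]
  exact ProbabilityTheory.integrable_gaussianPDFReal 0 1

theorem integral_gaussD : ∫ x, gaussD x = 1 := by
  rw [gaussD_eq_gaussianPDFReal]
  exact ProbabilityTheory.integral_gaussianPDFReal_eq_one 0 one_ne_zero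

theorem gaussD_le_half (x : ℝ) : gaussD x ≤ 1 / 2 := by
  have two_le_sqrt : 2 ≤ √(2 * Real.pi) :=
    Real.le_sqrt_of_sq_le (by linarith [Real.pi_gt_three])
  have exp_le_one : Real.exp (-(x ^ 2) / 2) ≤ 1 :=
    Real.exp_le_one_iff.mpr (by linarith [sq_nonneg x])
  calc gaussD x ≤ 2⁻¹ * 1 :=
        mul_le_mul (inv_anti₀ two_pos two_le_sqrt) exp_le_one (Real.exp_pos _).le (by norm_num)
    _ = 1 / 2 := by norm_num

theorem hasDerivAt_gaussD (x : ℝ) : HasDerivAt gaussD (-(x * gaussD x)) x := by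
  have exponent : HasDerivAt (fun x : ℝ => -(x ^ 2) / 2) (-x) x :=
    ((hasDerivAt_pow 2 x).neg.div_const 2).congr_deriv (by push_cast; ring)
  exact (exponent.exp.const_mul (√(2 * Real.pi))⁻¹).congr_deriv (by rw [gaussD]; ring)

theorem gaussD_zero_mul_gaussD_add (s t : ℝ) :
    gaussD 0 * gaussD (s + t) = gaussD s * gaussD t * Real.exp (-(s * t)) := by
  have exponents : -(s + t) ^ 2 / 2 = -s ^ 2 / 2 + -t ^ 2 / 2 + -(s * t) := by ring
  simp only [gaussD, exponents, Real.exp_add, ne_eq, OfNat.ofNat_ne_zero, not_false_eq_true,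
    zero_pow, neg_zero, zero_div, Real.exp_zero]
  ring

theorem gaussD_zero_mul_gaussD_add_le {s t : ℝ} (hst : 0 ≤ s * t) :
    gaussD 0 * gaussD (s + t) ≤ gaussD s * gaussD t := by
  rw [gaussD_zero_mul_gaussD_add]
  exact mul_le_of_le_one_right (mul_nonneg (gaussD_pos s).le (gaussD_pos t).le)
    (Real.exp_le_one_iff.mpr (neg_nonpos.mpr hst))

theorem abs_pow_mul_gaussD_nonneg (k : ℕ) (y : ℝ) : 0 ≤ |y| ^ k * gaussD y :=
  mul_nonneg (by positivity) (gaussD_pos y).le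

theorem integrable_abs_pow_mul_gaussD (k : ℕ) : Integrable fun y => |y| ^ k * gaussD y := by
  have rpow_integrable := (integrable_rpow_mul_exp_neg_mul_sq one_half_pos
    (neg_one_lt_zero.trans_le k.cast_nonneg)).norm.const_mul (√(2 * Real.pi))⁻¹
  refine rpow_integrable.congr (Filter.Eventually.of_forall fun y => ?_)
  simp only [Real.rpow_natCast, norm_mul, norm_pow, Real.norm_eq_abs, Real.abs_exp, gaussD]
  ring_nf

theorem tendsto_pow_mul_gaussD_atTop (k : ℕ) :
    Filter.Tendsto (fun y => y ^ k * gaussD y) Filter.atTop (nhds 0) := by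
  have rpow_tendsto := ((tendsto_rpow_abs_mul_exp_neg_mul_sq_cocompact one_half_pos
    (k : ℝ)).mono_left atTop_le_cocompact).const_mul (√(2 * Real.pi))⁻¹
  rw [mul_zero] at rpow_tendsto
  refine rpow_tendsto.congr' ?_
  filter_upwards [Filter.eventually_ge_atTop 0] with y hy
  simp only [Real.rpow_natCast, abs_of_nonneg hy, gaussD]
  ring_nf

end Density

section Moments

/-- The absolute moment `∫ |y|^k ψ(y) dy` of the standard normal distribution. -/
noncomputable def absMoment (k : ℕ) : ℝ := ∫ y, |y| ^ k * gaussD y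

/-- The tail `∫_{y > a} |y|^k ψ(y) dy` of the `k`-th absolute moment; for `k = 0` it is the tail
probability `1 - Φ(a)`. -/
noncomputable def tailAbsMoment (k : ℕ) (a : ℝ) : ℝ := ∫ y in Set.Ioi a, |y| ^ k * gaussD y

theorem absMoment_nonneg (k : ℕ) : 0 ≤ absMoment k :=
  integral_nonneg (abs_pow_mul_gaussD_nonneg k)

theorem tailAbsMoment_nonneg (k : ℕ) (a : ℝ) : 0 ≤ tailAbsMoment k a :=
  integral_nonneg (abs_pow_mul_gaussD_nonneg k)

theorem tailAbsMoment_le_absMoment (k : ℕ) (a : ℝ) : tailAbsMoment k a ≤ absMoment k :=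
  setIntegral_le_integral (integrable_abs_pow_mul_gaussD k)
    (Filter.Eventually.of_forall (abs_pow_mul_gaussD_nonneg k))

theorem tailAbsMoment_zero_left (a : ℝ) : tailAbsMoment 0 a = ∫ y in Set.Ioi a, gaussD y := by
  simp only [tailAbsMoment, pow_zero, one_mul]

theorem setIntegral_Iic_abs_pow_mul_gaussD (k : ℕ) (a : ℝ) :
    ∫ y in Set.Iic a, |y| ^ k * gaussD y = absMoment k - tailAbsMoment k a :=
  eq_sub_of_add_eq (intervalIntegral.integral_Iic_add_Ioi
    (integrable_abs_pow_mul_gaussD k).integrableOn (integrable_abs_pow_mul_gaussD k).integrableOn)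

theorem absMoment_eq_two_mul_tailAbsMoment (k : ℕ) : absMoment k = 2 * tailAbsMoment k 0 := by
  unfold absMoment tailAbsMoment
  simpa only [abs_abs, gaussD_abs] using integral_comp_abs (f := fun y => |y| ^ k * gaussD y)

theorem absMoment_zero : absMoment 0 = 1 := by
  simpa only [absMoment, pow_zero, one_mul] using integral_gaussD

theorem tailAbsMoment_zero_zero : tailAbsMoment 0 0 = 1 / 2 := by
  linarith [absMoment_eq_two_mul_tailAbsMoment 0, absMoment_zero]

theorem tailAbsMoment_zero_le_one (a : ℝ) : tailAbsMoment 0 a ≤ 1 :=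
  absMoment_zero ▸ tailAbsMoment_le_absMoment 0 a

theorem tailAbsMoment_one {a : ℝ} (ha : 0 ≤ a) : tailAbsMoment 1 a = gaussD a := by
  have antideriv : ∀ y ∈ Set.Ici a, HasDerivAt (fun y => -gaussD y) (|y| ^ 1 * gaussD y) y :=
    fun y hy => (hasDerivAt_gaussD y).neg.congr_deriv <| by
      rw [neg_neg, pow_one, abs_of_nonneg (ha.trans hy)]
  have ftc := integral_Ioi_of_hasDerivAt_of_tendsto' antideriv
    (integrable_abs_pow_mul_gaussD 1).integrableOn
    (by simpa using (tendsto_pow_mul_gaussD_atTop 0).neg)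
  rw [tailAbsMoment, ftc, zero_sub, neg_neg]

theorem absMoment_one : absMoment 1 = 2 * gaussD 0 := by
  rw [absMoment_eq_two_mul_tailAbsMoment, tailAbsMoment_one le_rfl]

theorem tailAbsMoment_add_two (k : ℕ) {a : ℝ} (ha : 0 ≤ a) :
    tailAbsMoment (k + 2) a = a ^ (k + 1) * gaussD a + (k + 1) * tailAbsMoment k a := by
  have antideriv : ∀ y ∈ Set.Ici a, HasDerivAt (fun y => -(y ^ (k + 1) * gaussD y))
      (|y| ^ (k + 2) * gaussD y - (k + 1) * (|y| ^ k * gaussD y)) y := fun y hy =>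
    ((hasDerivAt_pow (k + 1) y).mul (hasDerivAt_gaussD y)).neg.congr_deriv <| by
      rw [abs_of_nonneg (ha.trans hy), Nat.add_sub_cancel]
      push_cast
      ring
  have int_high := integrable_abs_pow_mul_gaussD (k + 2)
  have int_low := (integrable_abs_pow_mul_gaussD k).const_mul ((k : ℝ) + 1)
  have ftc := integral_Ioi_of_hasDerivAt_of_tendsto' antideriv (int_high.sub int_low).integrableOn
    (by simpa using (tendsto_pow_mul_gaussD_atTop (k + 1)).neg)
  rw [integral_sub int_high.integrableOn int_low.integrableOn, integral_const_mul] at ftc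
  unfold tailAbsMoment
  linarith

theorem absMoment_add_two (k : ℕ) : absMoment (k + 2) = (k + 1) * absMoment k := by
  rw [absMoment_eq_two_mul_tailAbsMoment, absMoment_eq_two_mul_tailAbsMoment,
    tailAbsMoment_add_two k le_rfl, zero_pow k.succ_ne_zero]
  ring

end Moments

section TailBounds

theorem mul_tailAbsMoment_le (k : ℕ) (a : ℝ) : a * tailAbsMoment k a ≤ tailAbsMoment (k + 1) a := by
  unfold tailAbsMoment
  rw [← integral_const_mul]
  refine setIntegral_mono_on ((integrable_abs_pow_mul_gaussD k).const_mul a).integrableOn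
    (integrable_abs_pow_mul_gaussD (k + 1)).integrableOn measurableSet_Ioi fun y hy => ?_
  calc a * (|y| ^ k * gaussD y) ≤ |y| * (|y| ^ k * gaussD y) :=
        mul_le_mul_of_nonneg_right (hy.out.le.trans (le_abs_self y))
          (abs_pow_mul_gaussD_nonneg k y)
    _ = |y| ^ (k + 1) * gaussD y := by ring

theorem mul_tailAbsMoment_zero_le_gaussD {a : ℝ} (ha : 0 ≤ a) :
    a * tailAbsMoment 0 a ≤ gaussD a :=
  (mul_tailAbsMoment_le 0 a).trans_eq (tailAbsMoment_one ha)

theorem setIntegral_Ioi_comp_add_left {E : Type*} [NormedAddCommGroup E] [NormedSpace ℝ E]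
    (f : ℝ → E) (a b : ℝ) : ∫ t in Set.Ioi b, f (a + t) = ∫ t in Set.Ioi (a + b), f t := by
  rw [← (measurePreserving_add_left volume a).setIntegral_preimage_emb
    (measurableEmbedding_addLeft a) f (Set.Ioi (a + b)), Set.preimage_const_add_Ioi,
    add_sub_cancel_left]

theorem two_mul_gaussD_zero_mul_tailAbsMoment_le {a : ℝ} (ha : 0 ≤ a) :
    2 * gaussD 0 * tailAbsMoment 0 a ≤ gaussD a := by
  have shift : tailAbsMoment 0 a = ∫ t in Set.Ioi 0, gaussD (a + t) := by
    rw [tailAbsMoment_zero_left, setIntegral_Ioi_comp_add_left, add_zero]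
  have pointwise : gaussD 0 * tailAbsMoment 0 a ≤ gaussD a * tailAbsMoment 0 0 := by
    rw [shift, tailAbsMoment_zero_left, ← integral_const_mul, ← integral_const_mul]
    exact setIntegral_mono_on ((integrable_gaussD.comp_add_left a).const_mul _).integrableOn
      (integrable_gaussD.const_mul _).integrableOn measurableSet_Ioi
      fun t ht => gaussD_zero_mul_gaussD_add_le (mul_nonneg ha ht.out.le)
  rw [tailAbsMoment_zero_zero] at pointwise
  linarith

theorem tailAbsMoment_zero_eq_half_sub (a : ℝ) :
    tailAbsMoment 0 a = 1 / 2 - ∫ y in (0 : ℝ)..a, gaussD y := by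
  rw [← tailAbsMoment_zero_zero, tailAbsMoment_zero_left, tailAbsMoment_zero_left]
  exact eq_sub_of_add_eq' (intervalIntegral.integral_interval_add_Ioi
    integrable_gaussD.integrableOn integrable_gaussD.integrableOn)

theorem hasDerivAt_tailAbsMoment_zero (a : ℝ) : HasDerivAt (tailAbsMoment 0) (-gaussD a) a := by
  rw [funext tailAbsMoment_zero_eq_half_sub]
  exact (intervalIntegral.integral_hasDerivAt_right (continuous_gaussD.intervalIntegrable 0 a)
    continuous_gaussD.stronglyMeasurable.stronglyMeasurableAtFilter
    continuous_gaussD.continuousAt).const_sub (1 / 2)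

theorem tendsto_tailAbsMoment_atTop (k : ℕ) :
    Filter.Tendsto (tailAbsMoment k) Filter.atTop (nhds 0) :=
  tendsto_integral_Ioi_zero Filter.tendsto_id

theorem one_sub_two_mul_tailAbsMoment_zero_le {a : ℝ} (ha : 0 ≤ a) :
    1 - 2 * tailAbsMoment 0 a ≤ a := by
  have integral_le : ∫ y in (0 : ℝ)..a, gaussD y ≤ ∫ _ in (0 : ℝ)..a, (1 / 2 : ℝ) :=
    intervalIntegral.integral_mono_on ha (continuous_gaussD.intervalIntegrable 0 a)
      intervalIntegrable_const fun y _ => gaussD_le_half y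
  rw [intervalIntegral.integral_const, smul_eq_mul] at integral_le
  linarith [tailAbsMoment_zero_eq_half_sub a]

theorem tailAbsMoment_zero_mul_one_sub_le {a : ℝ} (ha : 0 ≤ a) :
    tailAbsMoment 0 a * (1 - tailAbsMoment 0 a) ≤ gaussD a := by
  -- The gap `ψ - Ψ (1 - Ψ)` has derivative `ψ(x) (1 - 2 Ψ(x) - x) ≤ 0` and vanishes at infinity.
  let gap : ℝ → ℝ := fun x => gaussD x - tailAbsMoment 0 x * (1 - tailAbsMoment 0 x)
  have gap_deriv (x : ℝ) : HasDerivAt gap (gaussD x * (1 - 2 * tailAbsMoment 0 x - x)) x := by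
    have tail_deriv := hasDerivAt_tailAbsMoment_zero x
    exact ((hasDerivAt_gaussD x).sub (tail_deriv.mul (tail_deriv.const_sub 1))).congr_deriv
      (by ring)
  have gap_antitone : AntitoneOn gap (Set.Ici 0) := by
    refine antitoneOn_of_deriv_nonpos (convex_Ici 0)
      (fun x _ => (gap_deriv x).continuousAt.continuousWithinAt)
      (fun x _ => (gap_deriv x).differentiableAt.differentiableWithinAt) fun x hx => ?_
    rw [interior_Ici] at hx
    rw [(gap_deriv x).deriv]
    exact mul_nonpos_of_nonneg_of_nonpos (gaussD_pos x).le
      (sub_nonpos.mpr (one_sub_two_mul_tailAbsMoment_zero_le hx.out.le))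
  have gap_tendsto : Filter.Tendsto gap Filter.atTop (nhds 0) := by
    have tail_tendsto := tendsto_tailAbsMoment_atTop 0
    simpa using (tendsto_pow_mul_gaussD_atTop 0).sub
      (tail_tendsto.mul (tail_tendsto.const_sub 1))
  refine sub_nonneg.mp (le_of_tendsto gap_tendsto ?_)
  filter_upwards [Filter.eventually_ge_atTop a] with x hax
  exact gap_antitone ha (ha.trans hax) hax

end TailBounds

section Eta

theorem eta_zero_left (a : ℝ) : eta 0 a = 1 := by
  simp [eta]

theorem eta_one_left (a : ℝ) : eta 1 a = 1 := by
  simp [eta]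

@[to_additive]
theorem prod_Icc_succ_bot {M : Type*} [CommMonoid M] (f : ℕ → M) (n : ℕ) :
    ∏ i ∈ Finset.Icc 1 (n + 1), f i = f 1 * ∏ i ∈ Finset.Icc 1 n, f (i + 1) := by
  induction n with
  | zero => simp
  | succ n ih =>
    rw [Finset.prod_Icc_succ_top (by omega), ih, Finset.prod_Icc_succ_top (by omega), mul_assoc]

theorem prod_eta_add_two (k n : ℕ) :
    ∏ j ∈ Finset.Icc 1 (n + 1), (((k + 2 : ℕ) : ℝ) + 1 - 2 * (j : ℝ)) =
      (k + 1) * ∏ j ∈ Finset.Icc 1 n, ((k : ℝ) + 1 - 2 * (j : ℝ)) := by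
  rw [prod_Icc_succ_bot]
  congr 1
  · push_cast
    ring
  · refine Finset.prod_congr rfl fun j _ => ?_
    push_cast
    ring

theorem eta_add_two (k : ℕ) (a : ℝ) : eta (k + 2) a = a ^ (k + 1) + (k + 1) * eta k a := by
  have term_shift : ∀ i ∈ Finset.Icc 1 (k / 2),
      a ^ (k + 2 + 1 - 2 * (i + 1)) *
          ∏ j ∈ Finset.Icc 1 (i + 1 - 1), (((k + 2 : ℕ) : ℝ) + 1 - 2 * (j : ℝ)) =
        (k + 1) * (a ^ (k + 1 - 2 * i) *
          ∏ j ∈ Finset.Icc 1 (i - 1), ((k : ℝ) + 1 - 2 * (j : ℝ))) := fun i hi => by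
    obtain ⟨m, rfl⟩ := Nat.exists_eq_add_of_le' (Finset.mem_Icc.mp hi).1
    rw [Nat.add_sub_cancel, Nat.add_sub_cancel, prod_eta_add_two,
      show k + 2 + 1 - 2 * (m + 1 + 1) = k + 1 - 2 * (m + 1) by omega]
    ring
  unfold eta
  rw [Nat.add_div_right k two_pos, prod_eta_add_two, sum_Icc_succ_bot,
    Finset.sum_congr rfl term_shift, ← Finset.mul_sum, Nat.sub_self, Finset.Icc_eq_empty (by simp),
    Finset.prod_empty, mul_one, mul_one, show k + 2 + 1 - 2 = k + 1 by omega]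
  ring

theorem eta_nonneg (k : ℕ) {a : ℝ} (ha : 0 ≤ a) : 0 ≤ eta k a := by
  induction k using Nat.twoStepInduction with
  | zero => rw [eta_zero_left]; exact zero_le_one
  | one => rw [eta_one_left]; exact zero_le_one
  | more k ih _ => rw [eta_add_two]; positivity

theorem pow_le_mul_eta_add_absMoment (k : ℕ) {a : ℝ} (ha : 0 ≤ a) :
    a ^ k ≤ a * eta k a + absMoment k := by
  match k with
  | 0 => rw [pow_zero, eta_zero_left, absMoment_zero]; linarith
  | 1 => rw [pow_one, eta_one_left]; linarith [absMoment_nonneg 1]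
  | k + 2 =>
    have eta_term : 0 ≤ a * ((k + 1) * eta k a) :=
      mul_nonneg ha (mul_nonneg (by positivity) (eta_nonneg k ha))
    calc a ^ (k + 2) = a * a ^ (k + 1) := pow_succ' a (k + 1)
      _ ≤ a * eta (k + 2) a + absMoment (k + 2) := by
        rw [eta_add_two]
        linarith [absMoment_nonneg (k + 2)]

theorem one_sub_tail_mul_tailAbsMoment_le (k : ℕ) {a : ℝ} (ha : 0 ≤ a) :
    (1 - tailAbsMoment 0 a) * tailAbsMoment k a ≤ gaussD a * eta k a := by
  have tail_nonneg := tailAbsMoment_nonneg 0 a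
  have density_nonneg := (gaussD_pos a).le
  induction k using Nat.twoStepInduction with
  | zero => rw [eta_zero_left]; linarith [tailAbsMoment_zero_mul_one_sub_le ha]
  | one =>
    rw [eta_one_left, tailAbsMoment_one ha, mul_one]
    exact mul_le_of_le_one_left density_nonneg (by linarith)
  | more k ih _ =>
    have boundary_nonneg : 0 ≤ a ^ (k + 1) * gaussD a := by positivity
    calc (1 - tailAbsMoment 0 a) * tailAbsMoment (k + 2) a
        = (1 - tailAbsMoment 0 a) * (a ^ (k + 1) * gaussD a) +
            (k + 1) * ((1 - tailAbsMoment 0 a) * tailAbsMoment k a) := by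
          rw [tailAbsMoment_add_two k ha]; ring
      _ ≤ a ^ (k + 1) * gaussD a + (k + 1) * (gaussD a * eta k a) := by
          have boundary_le := mul_le_of_le_one_left boundary_nonneg (sub_le_self 1 tail_nonneg)
          gcongr
      _ = gaussD a * eta (k + 2) a := by rw [eta_add_two]; ring

theorem tail_mul_absMoment_sub_tailAbsMoment_le (k : ℕ) {a : ℝ} (ha : 0 ≤ a) :
    tailAbsMoment 0 a * (absMoment k - tailAbsMoment k a) ≤ gaussD a * eta k a := by
  have tail_nonneg := tailAbsMoment_nonneg 0 a
  have density_nonneg := (gaussD_pos a).le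
  induction k using Nat.twoStepInduction with
  | zero =>
    rw [eta_zero_left, absMoment_zero, mul_one]
    exact tailAbsMoment_zero_mul_one_sub_le ha
  | one =>
    rw [eta_one_left, tailAbsMoment_one ha, absMoment_one]
    linarith [two_mul_gaussD_zero_mul_tailAbsMoment_le ha, mul_nonneg tail_nonneg density_nonneg]
  | more k ih _ =>
    have boundary_nonneg : 0 ≤ a ^ (k + 1) * gaussD a := by positivity
    calc tailAbsMoment 0 a * (absMoment (k + 2) - tailAbsMoment (k + 2) a)
        = (k + 1) * (tailAbsMoment 0 a * (absMoment k - tailAbsMoment k a)) -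
            tailAbsMoment 0 a * (a ^ (k + 1) * gaussD a) := by
          rw [absMoment_add_two, tailAbsMoment_add_two k ha]; ring
      _ ≤ (k + 1) * (gaussD a * eta k a) + a ^ (k + 1) * gaussD a := by
          have scaled_ih := mul_le_mul_of_nonneg_left ih (by positivity : (0 : ℝ) ≤ k + 1)
          linarith [mul_nonneg tail_nonneg boundary_nonneg]
      _ = gaussD a * eta (k + 2) a := by rw [eta_add_two]; ring

end Eta

section Centering

theorem PhiInt_comp_neg (g : ℝ → ℝ) : PhiInt (fun v => g (-v)) = PhiInt g := by
  unfold PhiInt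
  rw [← integral_neg_eq_self fun x => g x * gaussD x]
  simp only [gaussD_neg]

variable {g : ℝ → ℝ}

theorem PhiInt_eq_setIntegral_Iic_add_Ioi (hg : Integrable fun y => g y * gaussD y) (x : ℝ) :
    PhiInt g = (∫ y in Set.Iic x, g y * gaussD y) + ∫ y in Set.Ioi x, g y * gaussD y :=
  (intervalIntegral.integral_Iic_add_Ioi hg.integrableOn hg.integrableOn).symm

theorem integrable_sub_const_mul_gaussD (hg : Integrable fun y => g y * gaussD y) (c : ℝ) :
    Integrable fun y => (g y - c) * gaussD y := by
  simp only [sub_mul]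
  exact hg.sub (integrable_gaussD.const_mul c)

theorem integral_sub_PhiInt_mul_gaussD (hg : Integrable fun y => g y * gaussD y) :
    ∫ y, (g y - PhiInt g) * gaussD y = 0 := by
  simp only [sub_mul]
  rw [integral_sub hg (integrable_gaussD.const_mul _), integral_const_mul, integral_gaussD,
    mul_one, PhiInt, sub_self]

theorem setIntegral_Ioi_sub_PhiInt_mul_gaussD (hg : Integrable fun y => g y * gaussD y) (x : ℝ) :
    ∫ y in Set.Ioi x, (g y - PhiInt g) * gaussD y =
      -∫ y in Set.Iic x, (g y - PhiInt g) * gaussD y := by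
  have centered := integrable_sub_const_mul_gaussD hg (PhiInt g)
  rw [eq_neg_iff_add_eq_zero, add_comm, intervalIntegral.integral_Iic_add_Ioi
    centered.integrableOn centered.integrableOn, integral_sub_PhiInt_mul_gaussD hg]

theorem setIntegral_Iic_sub_PhiInt_mul_gaussD (hg : Integrable fun y => g y * gaussD y) (x : ℝ) :
    ∫ y in Set.Iic x, (g y - PhiInt g) * gaussD y =
      tailAbsMoment 0 x * (∫ y in Set.Iic x, g y * gaussD y) -
        (1 - tailAbsMoment 0 x) * ∫ y in Set.Ioi x, g y * gaussD y := by
  have mass : ∫ y in Set.Iic x, gaussD y = 1 - tailAbsMoment 0 x := by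
    simpa only [pow_zero, one_mul, absMoment_zero] using setIntegral_Iic_abs_pow_mul_gaussD 0 x
  simp only [sub_mul]
  rw [integral_sub hg.integrableOn (integrable_gaussD.const_mul _).integrableOn,
    integral_const_mul, mass,
    PhiInt_eq_setIntegral_Iic_add_Ioi hg x]
  ring

end Centering

section SteinSolution

variable {q : ℝ → ℝ} (k : ℕ)

theorem integrable_abs_pow_mul_mul_gaussD (hqm : AEStronglyMeasurable q)
    (hq : ∀ x, q x ∈ Set.Icc 0 1) : Integrable fun y => |y| ^ k * q y * gaussD y := by
  have norm_le : ∀ᵐ y, ‖q y‖ ≤ 1 := Filter.Eventually.of_forall fun y => by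
    rw [Real.norm_of_nonneg (hq y).1]
    exact (hq y).2
  exact ((integrable_abs_pow_mul_gaussD k).bdd_mul hqm norm_le).congr
    (Filter.Eventually.of_forall fun y => by ring)

theorem setIntegral_abs_pow_mul_mul_gaussD_mem_Icc (hqm : AEStronglyMeasurable q)
    (hq : ∀ x, q x ∈ Set.Icc 0 1) (s : Set ℝ) :
    ∫ y in s, |y| ^ k * q y * gaussD y ∈ Set.Icc 0 (∫ y in s, |y| ^ k * gaussD y) := by
  constructor
  · exact integral_nonneg fun y =>
      mul_nonneg (mul_nonneg (by positivity) (hq y).1) (gaussD_pos y).le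
  · exact setIntegral_mono (integrable_abs_pow_mul_mul_gaussD k hqm hq).integrableOn
      (integrable_abs_pow_mul_gaussD k).integrableOn fun y =>
        mul_le_mul_of_nonneg_right (mul_le_of_le_one_right (by positivity) (hq y).2)
          (gaussD_pos y).le

theorem gaussD_mul_steinF (hqm : AEStronglyMeasurable q) (hq : ∀ x, q x ∈ Set.Icc 0 1) (x : ℝ) :
    gaussD x * steinF q k x =
      tailAbsMoment 0 x * (∫ y in Set.Iic x, |y| ^ k * q y * gaussD y) -
        (1 - tailAbsMoment 0 x) * ∫ y in Set.Ioi x, |y| ^ k * q y * gaussD y := by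
  rw [steinF, mul_inv_cancel_left₀ (gaussD_pos x).ne',
    setIntegral_Iic_sub_PhiInt_mul_gaussD (integrable_abs_pow_mul_mul_gaussD k hqm hq)]

theorem abs_steinF_le_eta_of_nonneg (hqm : AEStronglyMeasurable q) (hq : ∀ x, q x ∈ Set.Icc 0 1)
    {x : ℝ} (hx : 0 ≤ x) : |steinF q k x| ≤ eta k x := by
  obtain ⟨left_nonneg, left_le⟩ :=
    setIntegral_abs_pow_mul_mul_gaussD_mem_Icc k hqm hq (Set.Iic x)
  obtain ⟨right_nonneg, right_le⟩ :=
    setIntegral_abs_pow_mul_mul_gaussD_mem_Icc k hqm hq (Set.Ioi x)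
  rw [setIntegral_Iic_abs_pow_mul_gaussD] at left_le
  have tail_nonneg := tailAbsMoment_nonneg 0 x
  have one_sub_tail_nonneg := sub_nonneg.mpr (tailAbsMoment_zero_le_one x)
  refine le_of_mul_le_mul_left ?_ (gaussD_pos x)
  rw [← abs_of_pos (gaussD_pos x), ← abs_mul, abs_of_pos (gaussD_pos x),
    gaussD_mul_steinF k hqm hq]
  refine abs_sub_le_of_nonneg_of_le (mul_nonneg tail_nonneg left_nonneg) ?_
    (mul_nonneg one_sub_tail_nonneg right_nonneg) ?_
  · exact (mul_le_mul_of_nonneg_left left_le tail_nonneg).trans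
      (tail_mul_absMoment_sub_tailAbsMoment_le k hx)
  · exact (mul_le_mul_of_nonneg_left right_le one_sub_tail_nonneg).trans
      (one_sub_tail_mul_tailAbsMoment_le k hx)

theorem mul_steinF_le_setIntegral_Iic (hqm : AEStronglyMeasurable q)
    (hq : ∀ x, q x ∈ Set.Icc 0 1) {x : ℝ} (hx : 0 ≤ x) :
    x * steinF q k x ≤ ∫ y in Set.Iic x, |y| ^ k * q y * gaussD y := by
  set left := ∫ y in Set.Iic x, |y| ^ k * q y * gaussD y
  set right := ∫ y in Set.Ioi x, |y| ^ k * q y * gaussD y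
  have left_nonneg : 0 ≤ left := (setIntegral_abs_pow_mul_mul_gaussD_mem_Icc k hqm hq _).1
  have right_nonneg : 0 ≤ right := (setIntegral_abs_pow_mul_mul_gaussD_mem_Icc k hqm hq _).1
  have one_sub_tail_nonneg := sub_nonneg.mpr (tailAbsMoment_zero_le_one x)
  refine le_of_mul_le_mul_left ?_ (gaussD_pos x)
  calc gaussD x * (x * steinF q k x)
      = x * tailAbsMoment 0 x * left - x * ((1 - tailAbsMoment 0 x) * right) := by
        rw [mul_left_comm, gaussD_mul_steinF k hqm hq]; ring
    _ ≤ x * tailAbsMoment 0 x * left :=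
        sub_le_self _ (mul_nonneg hx (mul_nonneg one_sub_tail_nonneg right_nonneg))
    _ ≤ gaussD x * left :=
        mul_le_mul_of_nonneg_right (mul_tailAbsMoment_zero_le_gaussD hx) left_nonneg

theorem abs_steinF'_le_of_nonneg (hqm : AEStronglyMeasurable q) (hq : ∀ x, q x ∈ Set.Icc 0 1)
    {x : ℝ} (hx : 0 ≤ x) : |steinF' q k x| ≤ x * eta k x + absMoment k := by
  have PhiInt_split :=
    PhiInt_eq_setIntegral_Iic_add_Ioi (integrable_abs_pow_mul_mul_gaussD k hqm hq) x
  have right_nonneg := (setIntegral_abs_pow_mul_mul_gaussD_mem_Icc k hqm hq (Set.Ioi x)).1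
  have PhiInt_le : PhiInt (fun v => |v| ^ k * q v) ≤ absMoment k := by
    simpa only [setIntegral_univ, PhiInt, absMoment] using
      (setIntegral_abs_pow_mul_mul_gaussD_mem_Icc k hqm hq Set.univ).2
  have value_nonneg : 0 ≤ x ^ k * q x := mul_nonneg (by positivity) (hq x).1
  have value_le : x ^ k * q x ≤ x ^ k := mul_le_of_le_one_right (by positivity) (hq x).2
  have lower : -(x * eta k x) ≤ x * steinF q k x := by
    rw [← mul_neg]
    exact mul_le_mul_of_nonneg_left (abs_le.mp (abs_steinF_le_eta_of_nonneg k hqm hq hx)).1 hx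
  rw [steinF', abs_of_nonneg hx, abs_le]
  constructor
  · linarith
  · linarith [mul_steinF_le_setIntegral_Iic k hqm hq hx, pow_le_mul_eta_add_absMoment k hx]

end SteinSolution

section Reflection

variable (k : ℕ)

theorem PhiInt_abs_pow_mul_comp_neg (q : ℝ → ℝ) :
    PhiInt (fun v => |v| ^ k * q (-v)) = PhiInt fun v => |v| ^ k * q v := by
  simpa only [abs_neg] using PhiInt_comp_neg fun v => |v| ^ k * q v

variable {q : ℝ → ℝ}

theorem steinF_comp_neg (hq : Integrable fun y => |y| ^ k * q y * gaussD y) (x : ℝ) :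
    steinF (fun y => q (-y)) k x = -steinF q k (-x) := by
  have reflect := integral_comp_neg_Iic x fun y =>
    (|y| ^ k * q y - PhiInt fun v => |v| ^ k * q v) * gaussD y
  simp only [abs_neg, gaussD_neg] at reflect
  rw [steinF, steinF, PhiInt_abs_pow_mul_comp_neg, reflect,
    setIntegral_Ioi_sub_PhiInt_mul_gaussD hq, gaussD_neg, mul_neg]

theorem steinF'_comp_neg (hq : Integrable fun y => |y| ^ k * q y * gaussD y) (x : ℝ) :
    steinF' (fun y => q (-y)) k x = steinF' q k (-x) := by
  rw [steinF', steinF', PhiInt_abs_pow_mul_comp_neg, steinF_comp_neg k hq, abs_neg, neg_mul_comm]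

end Reflection

theorem stein_solution_eta_bounds_general {q : ℝ → ℝ} (hqm : AEStronglyMeasurable q)
    (hq : ∀ x, q x ∈ Set.Icc 0 1) (k : ℕ) (x : ℝ) :
    |steinF q k x| ≤ eta k |x| ∧
      |steinF' q k x| ≤ |x| * eta k |x| + ∫ y, |y| ^ k * gaussD y := by
  rcases le_total 0 x with hx | hx
  · rw [abs_of_nonneg hx]
    exact ⟨abs_steinF_le_eta_of_nonneg k hqm hq hx, abs_steinF'_le_of_nonneg k hqm hq hx⟩
  · have int := integrable_abs_pow_mul_mul_gaussD k hqm hq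
    have hqm_neg : AEStronglyMeasurable fun y => q (-y) :=
      hqm.comp_measurePreserving (Measure.measurePreserving_neg volume)
    have hx_neg : 0 ≤ -x := neg_nonneg.mpr hx
    have bound := abs_steinF_le_eta_of_nonneg k hqm_neg (fun y => hq (-y)) hx_neg
    have bound' := abs_steinF'_le_of_nonneg k hqm_neg (fun y => hq (-y)) hx_neg
    rw [steinF_comp_neg k int, neg_neg, abs_neg] at bound
    rw [steinF'_comp_neg k int, neg_neg] at bound'
    rw [abs_of_nonpos hx]
    exact ⟨bound, bound'⟩

/-- for `q ∈ ℋ` and `k ∈ ℕ₀`, `|f_k(x)| ≤ η_k(|x|)` and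
`|f_k'(x)| ≤ |x|·η_k(|x|) + ∫ |y|^k ψ(y) dy`. -/
theorem stein_solution_eta_bounds (q : ℝ → ℝ) (hq : memH q) (k : ℕ) :
    (∀ x : ℝ, |steinF q k x| ≤ eta k |x|) ∧
    (∀ x : ℝ, |steinF' q k x| ≤ |x| * eta k |x| + ∫ y, |y| ^ k * gaussD y) := by
  have bounds := stein_solution_eta_bounds_general hq.2.1.measurable.aestronglyMeasurable hq.1 k
  exact ⟨fun x => (bounds x).1, fun x => (bounds x).2⟩
end

section
/- Let k ∈ ℕ, λ > 0, and let F : ℝ → ℝ be a function such that there exists a constant C > 0 with |F(x) − P_λ^k(x;z,F)| ≤ C(λ^{k+1} + (x−z)^{k+1}) for all z ∈ ℝ and all z ≤ x ≤ z + (k+1)λ. Then for all 0 ≤ y ≤ λ: ‖Δ_y^{k+1}F‖ ≤ D·(λ^{k+1} + y^{k+1}), where D = C·(1 + Σ_{j=1}^{k+1} binom(k+1, j)·j^{k+1}). -/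
open Finset

/-- `k`-th iterated difference `Δ_y^k G`. -/
noncomputable def Δiter (y : ℝ) (k : ℕ) (G : ℝ → ℝ) : ℝ → ℝ :=
  (fun (G : ℝ → ℝ) (z : ℝ) => G (z + y) - G z)^[k] G

/-- The interpolating polynomial `P_y^k(x; z, F)` of `F` at the points `z, z+y, …, z+ky`. -/
noncomputable def interp (y : ℝ) (k : ℕ) (z : ℝ) (F : ℝ → ℝ) (x : ℝ) : ℝ :=
  F z + ∑ s ∈ Finset.Icc 1 k,
    Δiter y s F z * ∏ i ∈ Finset.Icc 1 s, (x - z - ((i : ℝ) - 1) * y) / ((i : ℝ) * y)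

/-!
Differences of order `k + 1` annihilate polynomials of degree at most `k`, so `Δ_y^{k+1} F` is
unchanged when `P_λ^k(·; z, F)` is subtracted from `F`; only the degree of the subtracted polynomial
matters, not that it interpolates `F`. Expanding the difference of the remainder binomially at the
nodes `z + j y`, all of which lie in `[z, z + (k + 1) λ]`, and bounding each term by the hypothesis
gives the claim: the node `j = 0` contributes the summand `1` of `D / C`, and each node `j ≥ 1`
contributes `binom(k + 1, j) j^{k+1}` because
`λ^{k+1} + (j y)^{k+1} ≤ j^{k+1} (λ^{k+1} + y^{k+1})`.
-/

open scoped Polynomial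

section ForwardDifference

theorem fwdDiff_iter_polynomial_eval_eq_zero {R : Type*} [CommRing R] (h : R) {P : R[X]} {n : ℕ}
    (hP : P.natDegree < n) : (fwdDiff h)^[n] P.eval = 0 := by
  funext x
  -- The step `h` at `x` becomes the unit step at `0` after the substitution `t ↦ x + t * h`.
  let Q : R[X] := P.comp (.C x + .X * .C h)
  have hQ : Q.natDegree < n :=
    calc Q.natDegree ≤ P.natDegree * (Polynomial.C x + .X * .C h).natDegree :=
          Polynomial.natDegree_comp_le
      _ ≤ P.natDegree := mul_le_of_le_one_right' (by compute_degree)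
      _ < n := hP
  calc (fwdDiff h)^[n] P.eval x = (fwdDiff 1)^[n] Q.eval 0 := by
        simp [Q, fwdDiff_iter_eq_sum_shift, mul_comm h]
    _ = 0 := congrFun (Polynomial.fwdDiff_iter_eq_zero_of_degree_lt hQ) 0

theorem norm_fwdDiff_iter_le {M E : Type*} [AddCommMonoid M] [SeminormedAddCommGroup E]
    (h : M) (f : M → E) (n : ℕ) (x : M) :
    ‖(fwdDiff h)^[n] f x‖ ≤ ∑ j ∈ range (n + 1), n.choose j * ‖f (x + j • h)‖ := by
  rw [fwdDiff_iter_eq_sum_shift]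
  refine norm_sum_le_of_le _ fun j _ ↦ (norm_zsmul_le _ _).trans_eq ?_
  simp [norm_mul]

theorem norm_fwdDiff_iter_le_sum_norm_sub_eval {R : Type*} [SeminormedCommRing R] (h : R)
    (f : R → R) {P : R[X]} {n : ℕ} (hP : P.natDegree < n) (x : R) :
    ‖(fwdDiff h)^[n] f x‖ ≤
      ∑ j ∈ range (n + 1), n.choose j * ‖f (x + j • h) - P.eval (x + j • h)‖ := by
  have hf : (fwdDiff h)^[n] f = (fwdDiff h)^[n] (f - P.eval) := by
    rw [← add_zero ((fwdDiff h)^[n] (f - P.eval)), ← fwdDiff_iter_polynomial_eval_eq_zero h hP,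
      ← fwdDiff_iter_add, sub_add_cancel]
  rw [hf]
  exact norm_fwdDiff_iter_le h (f - P.eval) n x

end ForwardDifference

theorem sum_choose_mul_add_pow_mul_le {R : Type*} [Semiring R] [PartialOrder R] [IsOrderedRing R]
    (n m : ℕ) {a b : R} (ha : 0 ≤ a) (hb : 0 ≤ b) :
    ∑ j ∈ range (n + 1), n.choose j * (a + (j : R) ^ m * b) ≤
      (1 + ∑ j ∈ Icc 1 n, n.choose j * (j : R) ^ m) * (a + b) := by
  have hzero : a + (0 : R) ^ m * b ≤ a + b := by
    gcongr
    exact mul_le_of_le_one_left hb (pow_le_one₀ le_rfl zero_le_one)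
  have hterm {j : ℕ} (hj : 1 ≤ j) : a + (j : R) ^ m * b ≤ (j : R) ^ m * (a + b) := by
    have one_le_cast : (1 : R) ≤ j := mod_cast Nat.mono_cast (α := R) hj
    rw [mul_add]
    gcongr
    exact le_mul_of_one_le_left ha (one_le_pow₀ one_le_cast)
  calc ∑ j ∈ range (n + 1), n.choose j * (a + (j : R) ^ m * b)
      = a + (0 : R) ^ m * b + ∑ j ∈ Icc 1 n, n.choose j * (a + (j : R) ^ m * b) := by
        rw [Nat.range_succ_eq_Icc_zero, ← add_sum_Ioc_eq_sum_Icc n.zero_le,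
          ← Icc_add_one_left_eq_Ioc]
        simp
    _ ≤ (a + b) + ∑ j ∈ Icc 1 n, n.choose j * ((j : R) ^ m * (a + b)) := by
        gcongr with j hj
        exact hterm (mem_Icc.mp hj).1
    _ = (1 + ∑ j ∈ Icc 1 n, n.choose j * (j : R) ^ m) * (a + b) := by
        simp only [add_mul, one_mul, sum_mul, mul_assoc]

section Interpolation

variable (lam : ℝ) (k : ℕ) (z : ℝ) (F : ℝ → ℝ)

/-- `P_λ^k(·; z, F)` as a formal polynomial, so that its degree can be spoken of. -/
noncomputable def interpPolynomial : ℝ[X] :=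
  .C (F z) + ∑ s ∈ Icc 1 k, .C (Δiter lam s F z) *
    ∏ i ∈ Icc 1 s, .C ((i : ℝ) * lam)⁻¹ * (.X - .C (z + ((i : ℝ) - 1) * lam))

theorem eval_interpPolynomial (x : ℝ) :
    (interpPolynomial lam k z F).eval x = interp lam k z F x := by
  simp only [interpPolynomial, interp, Polynomial.eval_add, Polynomial.eval_C,
    Polynomial.eval_finsetSum, Polynomial.eval_mul, Polynomial.eval_prod, Polynomial.eval_sub,
    Polynomial.eval_X, div_eq_inv_mul, sub_sub]

theorem natDegree_interpPolynomial_le : (interpPolynomial lam k z F).natDegree ≤ k := by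
  refine Polynomial.natDegree_add_le_of_degree_le (by simp) ?_
  refine Polynomial.natDegree_sum_le_of_forall_le _ _ fun s hs ↦ ?_
  refine (Polynomial.natDegree_C_mul_le _ _).trans ((Polynomial.natDegree_prod_le _ _).trans ?_)
  calc _ ≤ ∑ _i ∈ Icc 1 s, 1 := sum_le_sum fun i _ ↦
        (Polynomial.natDegree_C_mul_le _ _).trans (Polynomial.natDegree_X_sub_C_le _)
    _ = s := by simp
    _ ≤ k := (mem_Icc.mp hs).2

end Interpolation

theorem Δiter_eq_fwdDiff_iter (y : ℝ) (k : ℕ) (G : ℝ → ℝ) : Δiter y k G = (fwdDiff y)^[k] G := rfl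

theorem diff_bound_of_interp_bound_general {k : ℕ} {lam C y z : ℝ} {F : ℝ → ℝ} {P : ℝ[X]}
    (hP : P.natDegree ≤ k) (hC : 0 ≤ C) (hy : 0 ≤ y) (hylam : y ≤ lam)
    (h : ∀ x : ℝ, z ≤ x → x ≤ z + ((k : ℝ) + 1) * lam →
      |F x - P.eval x| ≤ C * (lam ^ (k + 1) + (x - z) ^ (k + 1))) :
    |Δiter y (k + 1) F z| ≤
      C * (1 + ∑ j ∈ Icc 1 (k + 1), ((k + 1).choose j : ℝ) * (j : ℝ) ^ (k + 1)) *
        (lam ^ (k + 1) + y ^ (k + 1)) := by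
  have hlam : 0 ≤ lam := hy.trans hylam
  have hnode {j : ℕ} (hj : j ∈ range (k + 1 + 1)) :
      |F (z + j • y) - P.eval (z + j • y)| ≤
        C * (lam ^ (k + 1) + (j : ℝ) ^ (k + 1) * y ^ (k + 1)) := by
    have hjk : (j : ℝ) ≤ k + 1 := mod_cast mem_range_succ_iff.mp hj
    have hupper : z + j • y ≤ z + ((k : ℝ) + 1) * lam := by
      rw [nsmul_eq_mul]
      gcongr
    simpa [mul_pow] using h (z + j • y) (le_add_of_nonneg_right (nsmul_nonneg hy j)) hupper
  calc |Δiter y (k + 1) F z|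
      ≤ ∑ j ∈ range (k + 1 + 1),
          (k + 1).choose j * |F (z + j • y) - P.eval (z + j • y)| := by
        rw [Δiter_eq_fwdDiff_iter]
        exact norm_fwdDiff_iter_le_sum_norm_sub_eval y F (Nat.lt_succ_of_le hP) z
    _ ≤ ∑ j ∈ range (k + 1 + 1),
          (k + 1).choose j * (C * (lam ^ (k + 1) + (j : ℝ) ^ (k + 1) * y ^ (k + 1))) := by
        gcongr with j hj
        exact hnode hj
    _ = C * ∑ j ∈ range (k + 1 + 1),
          (k + 1).choose j * (lam ^ (k + 1) + (j : ℝ) ^ (k + 1) * y ^ (k + 1)) := by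
        simp only [mul_sum, mul_left_comm]
    _ ≤ C * (1 + ∑ j ∈ Icc 1 (k + 1), ((k + 1).choose j : ℝ) * (j : ℝ) ^ (k + 1)) *
          (lam ^ (k + 1) + y ^ (k + 1)) := by
        rw [mul_assoc]
        gcongr
        exact sum_choose_mul_add_pow_mul_le _ _ (by positivity) (by positivity)

/-- if `|F(x) − P_λ^k(x;z,F)| ≤ C(λ^{k+1} + (x−z)^{k+1})` for all `z` and
`z ≤ x ≤ z+(k+1)λ`, then `‖Δ_y^{k+1}F‖ ≤ D(λ^{k+1} + y^{k+1})` for all `0 ≤ y ≤ λ`, where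
`D = C(1 + Σ_{j=1}^{k+1} binom(k+1,j) j^{k+1})`. -/
theorem diff_bound_of_interp_bound (k : ℕ) (hk : 1 ≤ k) (lam : ℝ) (hlam : 0 < lam)
    (F : ℝ → ℝ) (C : ℝ) (hC : 0 < C)
    (h : ∀ z x : ℝ, z ≤ x → x ≤ z + ((k : ℝ) + 1) * lam →
      |F x - interp lam k z F x| ≤ C * (lam ^ (k + 1) + (x - z) ^ (k + 1))) :
    ∀ y : ℝ, 0 ≤ y → y ≤ lam → ∀ z : ℝ,
      |Δiter y (k + 1) F z| ≤
        C * (1 + ∑ j ∈ Finset.Icc 1 (k + 1), ((k + 1).choose j : ℝ) * (j : ℝ) ^ (k + 1)) *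
          (lam ^ (k + 1) + y ^ (k + 1)) := by
  intro y hy hylam z
  exact diff_bound_of_interp_bound_general (natDegree_interpPolynomial_le lam k z F) hC.le hy hylam
    (by simpa only [eval_interpPolynomial] using h z)
end
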